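/- arXiv:1606.02767 — 5 statements merged into one kernel-verified Lean document; each statement's English description precedes it below -/
import Mathlib

section
/- Let Γ be an alphabet with a distinguished blank symbol (blank = default), and let T be a (two-way infinite, cofinitely blank) Turing-machine tape over Γ, represented as Turing.Tape Γ with a head symbol, a left half-tape and a right half-tape. If for symbols w₁, w₂ : Γ and movement directions d₁, d₂ ∈ {left, right} ∪ {stay} (stay meaning no move is applied) the two configurations obtained from T by writing wᵢ at the head and then moving in direction dᵢ are equal as tapes, then either (w₁ = w₂ and d₁ = d₂), or the trivial blank case holds: w₁ = default, w₂ = default, the left half-tape of T is entirely blank, and the right half-tape of T is entirely blank. -/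
/-- Apply an optional move direction to a tape: `none` means "stay" (no move). -/
def moveOpt {Γ : Type*} [Inhabited Γ] (d : Option Turing.Dir) (T : Turing.Tape Γ) :
    Turing.Tape Γ :=
  match d with
  | none => T
  | some d => Turing.Tape.move d T

open Turing in
theorem blank_nth_default {Γ : Type*} [Inhabited Γ] (n : ℕ) :
    (default : ListBlank Γ).nth n = default := by
  change (ListBlank.mk ([] : List Γ)).nth n = default
  rw [ListBlank.nth_mk]
  rfl

open Turing in
theorem blank_of_tail_tail {Γ : Type*} [Inhabited Γ] (L : ListBlank Γ)
    (h : L.tail.tail = L) : L = default := by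
  have h2 : ∀ n, L.nth (n + 2) = L.nth n := by
    intro n
    rw [ListBlank.nth_succ, ListBlank.nth_succ, h]
  have h3 : ∀ k n, L.nth (n + 2 * k) = L.nth n := by
    intro k
    induction k with
    | zero => intro n; rfl
    | succ k ih =>
      intro n
      rw [← ih n, ← h2 (n + 2 * k)]
      rfl
  have h4 : ∃ k, ∀ n, k ≤ n → L.nth n = default := by
    refine L.induction_on fun l => ⟨l.length, fun n hn => ?_⟩
    rw [ListBlank.nth_mk, List.getI_eq_default _ hn]
  obtain ⟨k, hk⟩ := h4
  refine ListBlank.ext fun n => ?_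
  rw [← h3 k n, hk _ (by omega), blank_nth_default]

open Turing in
theorem blank_of_eq_cons {Γ : Type*} [Inhabited Γ] (L : ListBlank Γ) (w : Γ)
    (h : L = L.cons w) : L = default ∧ w = default := by
  have ht : L.tail = L := by
    conv_lhs => rw [h]
    exact ListBlank.tail_cons w L
  have hL := blank_of_tail_tail L (by rw [ht, ht])
  refine ⟨hL, ?_⟩
  have := ListBlank.head_cons w L
  rw [← h, hL] at this
  exact this.symm

open Turing in
theorem blank_of_tail_eq_cons {Γ : Type*} [Inhabited Γ] (L : ListBlank Γ) (w : Γ)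
    (h : L.tail = L.cons w) : L = default ∧ w = default := by
  have hL := blank_of_tail_tail L (by rw [h, ListBlank.tail_cons])
  refine ⟨hL, ?_⟩
  have := ListBlank.head_cons w L
  rw [← h, hL] at this
  exact this.symm

open Turing in
theorem blank_of_eq_tail {Γ : Type*} [Inhabited Γ] (L : ListBlank Γ) (w : Γ)
    (h : L = L.tail) (hw : w = L.head) : L = default ∧ w = default := by
  have hL := blank_of_tail_tail L (by rw [← h, ← h])
  refine ⟨hL, ?_⟩
  rw [hw, hL]
  rfl

/-- Lemma 1 of the paper, at the level of tapes: apart from the trivial all-blank case,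
the transition rule (written symbol and move direction) applied between two consecutive
configurations is uniquely determined by the configurations. -/
theorem rule_unique_of_tape_eq {Γ : Type*} [Inhabited Γ] (T : Turing.Tape Γ)
    (w₁ w₂ : Γ) (d₁ d₂ : Option Turing.Dir)
    (h : moveOpt d₁ (T.write w₁) = moveOpt d₂ (T.write w₂)) :
    (w₁ = w₂ ∧ d₁ = d₂) ∨
      (w₁ = default ∧ w₂ = default ∧ T.left = default ∧ T.right = default) := by
  obtain ⟨a, L, R⟩ := T
  have inj : ∀ (x y : Γ) (M : Turing.ListBlank Γ), M.cons x = M.cons y → x = y := by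
    intro x y M e
    simpa using congrArg Turing.ListBlank.head e
  rcases d₁ with _ | _ | _ <;> rcases d₂ with _ | _ | _ <;>
    simp only [moveOpt, Turing.Tape.write, Turing.Tape.move, Turing.Tape.mk.injEq] at h <;>
    obtain ⟨h1, h2, h3⟩ := h
  · exact Or.inl ⟨h1, rfl⟩
  · have A := blank_of_eq_tail L w₁ h2 h1
    have B := blank_of_eq_cons R w₂ h3
    exact Or.inr ⟨A.2, B.2, A.1, B.1⟩
  · have A := blank_of_eq_tail R w₁ h3 h1
    have B := blank_of_eq_cons L w₂ h2
    exact Or.inr ⟨A.2, B.2, B.1, A.1⟩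
  · have A := blank_of_eq_tail L w₂ h2.symm h1.symm
    have B := blank_of_eq_cons R w₁ h3.symm
    exact Or.inr ⟨B.2, A.2, A.1, B.1⟩
  · exact Or.inl ⟨inj _ _ _ h3, rfl⟩
  · have A := blank_of_tail_eq_cons L w₂ h2
    have B := blank_of_tail_eq_cons R w₁ h3.symm
    exact Or.inr ⟨B.2, A.2, A.1, B.1⟩
  · have A := blank_of_eq_tail R w₂ h3.symm h1.symm
    have B := blank_of_eq_cons L w₁ h2.symm
    exact Or.inr ⟨B.2, A.2, B.1, A.1⟩
  · have A := blank_of_tail_eq_cons L w₁ h2.symm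
    have B := blank_of_tail_eq_cons R w₂ h3
    exact Or.inr ⟨A.2, B.2, A.1, B.1⟩
  · exact Or.inl ⟨inj _ _ _ h2, rfl⟩
end

section
/- Let Γ be an alphabet with a distinguished blank symbol (blank = default) and T : Turing.Tape Γ. For symbols w₁, w₂ : Γ, the tape obtained by writing w₁ and moving left equals the tape obtained by writing w₂ with no move, i.e. Tape.move Turing.Dir.left (T.write w₁) = T.write w₂, if and only if w₁ = default, w₂ = default, the left half-tape of T is entirely blank (T.left = default), and the right half-tape of T is entirely blank (T.right = default). -/
theorem listBlank_eq_default_of_tail_eq {Γ : Type*} [Inhabited Γ] (L : Turing.ListBlank Γ)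
    (h : L.tail = L) : L = default := by
  have hc : ∀ n, L.nth n = L.nth 0 := by
    intro n
    induction n with
    | zero => rfl
    | succ k ih => rw [Turing.ListBlank.nth_succ, h, ih]
  have hd : ∃ n, L.nth n = default := by
    induction L using Turing.ListBlank.induction_on with
    | _ l =>
      refine ⟨l.length, ?_⟩
      rw [Turing.ListBlank.nth_mk, List.getI_eq_default _ le_rfl]
  obtain ⟨n, hn⟩ := hd
  apply Turing.ListBlank.ext
  intro i
  rw [hc i, ← hc n, hn]
  change _ = (Turing.ListBlank.mk []).nth i
  rw [Turing.ListBlank.nth_mk, List.getI_nil]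

/-- The "stay versus left-move" case in the proof of the paper's Lemma 1:
writing `w₁` and moving left gives the same tape as writing `w₂` without moving
iff both written symbols are blank and both half-tapes of `T` are entirely blank. -/
theorem write_move_left_eq_write_iff {Γ : Type*} [Inhabited Γ] (T : Turing.Tape Γ)
    (w₁ w₂ : Γ) :
    Turing.Tape.move Turing.Dir.left (T.write w₁) = T.write w₂ ↔
      w₁ = default ∧ w₂ = default ∧ T.left = default ∧ T.right = default := by
  obtain ⟨a, L, R⟩ := T
  have hh : (default : Turing.ListBlank Γ).head = default := rfl
  have ht : (default : Turing.ListBlank Γ).tail = default := rfl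
  simp only [Turing.Tape.write, Turing.Tape.move, Turing.Tape.mk.injEq]
  constructor
  · rintro ⟨h1, h2, h3⟩
    have hL := listBlank_eq_default_of_tail_eq L h2
    have hR := listBlank_eq_default_of_tail_eq R (by
      have := congrArg Turing.ListBlank.tail h3
      rw [Turing.ListBlank.tail_cons] at this
      exact this.symm)
    refine ⟨?_, ?_, hL, hR⟩
    · have := congrArg Turing.ListBlank.head h3
      rw [Turing.ListBlank.head_cons, hR] at this
      exact this
    · rw [← h1, hL]
      rfl
  · rintro ⟨rfl, rfl, rfl, rfl⟩
    refine ⟨hh, ht, ?_⟩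
    have := Turing.ListBlank.cons_head_tail (default : Turing.ListBlank Γ)
    rwa [hh, ht] at this
end

section
/- Let Γ be an alphabet with a distinguished blank symbol (blank = default) and T : Turing.Tape Γ. For symbols w₁, w₂ : Γ, the tape obtained by writing w₁ and moving right equals the tape obtained by writing w₂ with no move, i.e. Tape.move Turing.Dir.right (T.write w₁) = T.write w₂, if and only if w₁ = default, w₂ = default, the left half-tape of T is entirely blank (T.left = default), and the right half-tape of T is entirely blank (T.right = default). -/
open Turing in
theorem listBlank_eq_default_of_tail {Γ : Type*} [Inhabited Γ] (l : ListBlank Γ)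
    (h : l.tail = l) : l = default := by
  have h1 : ∀ n, l.nth n = l.head := by
    intro n
    induction n with
    | zero => exact ListBlank.nth_zero l
    | succ k ih => rw [ListBlank.nth_succ, h, ih]
  have h2 : ∃ n, l.nth n = default := by
    induction l using ListBlank.induction_on with
    | _ l => exact ⟨l.length, by rw [ListBlank.nth_mk]; exact List.getI_eq_default _ le_rfl⟩
  obtain ⟨n, hn⟩ := h2
  apply ListBlank.ext
  intro i
  rw [h1 i, ← h1 n, hn]
  change _ = (ListBlank.mk []).nth i
  rw [ListBlank.nth_mk]
  exact (List.getI_eq_default _ (Nat.zero_le _)).symm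

open Turing in
theorem listBlank_head_default {Γ : Type*} [Inhabited Γ] :
    (default : ListBlank Γ).head = default := rfl

open Turing in
theorem listBlank_tail_default {Γ : Type*} [Inhabited Γ] :
    (default : ListBlank Γ).tail = default := rfl

/-- The "stay versus right-move" case in the proof of the paper's Lemma 1:
writing `w₁` and moving right gives the same tape as writing `w₂` without moving
iff both written symbols are blank and both half-tapes of `T` are entirely blank. -/
theorem write_move_right_eq_write_iff {Γ : Type*} [Inhabited Γ] (T : Turing.Tape Γ)
    (w₁ w₂ : Γ) :
    Turing.Tape.move Turing.Dir.right (T.write w₁) = T.write w₂ ↔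
      w₁ = default ∧ w₂ = default ∧ T.left = default ∧ T.right = default := by
  obtain ⟨a, L, R⟩ := T
  simp only [Turing.Tape.write, Turing.Tape.move, Turing.Tape.mk.injEq]
  constructor
  · rintro ⟨h1, h2, h3⟩
    have hR := listBlank_eq_default_of_tail R h3
    have hL : L = default := by
      apply listBlank_eq_default_of_tail
      have := congrArg Turing.ListBlank.tail h2
      rw [Turing.ListBlank.tail_cons] at this
      exact this.symm
    have hw := congrArg Turing.ListBlank.head h2
    rw [Turing.ListBlank.head_cons, hL, listBlank_head_default] at hw
    rw [hR, listBlank_head_default] at h1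
    exact ⟨hw, h1.symm, hL, hR⟩
  · rintro ⟨rfl, rfl, rfl, rfl⟩
    refine ⟨listBlank_head_default, ?_, listBlank_tail_default⟩
    exact Turing.ListBlank.cons_head_tail (default : Turing.ListBlank Γ)
end

section
/- Let Γ be an alphabet with a distinguished blank symbol (blank = default) and T : Turing.Tape Γ. For symbols w₁, w₂ : Γ, the tape obtained by writing w₁ and moving left equals the tape obtained by writing w₂ and moving right, i.e. Tape.move Turing.Dir.left (T.write w₁) = Tape.move Turing.Dir.right (T.write w₂), if and only if w₁ = default, w₂ = default, the left half-tape of T is entirely blank (T.left = default), and the right half-tape of T is entirely blank (T.right = default). -/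
theorem listBlank_default_nth {Γ : Type*} [Inhabited Γ] (n : ℕ) :
    (default : Turing.ListBlank Γ).nth n = default := by
  change (Turing.ListBlank.mk ([] : List Γ)).nth n = default
  rw [Turing.ListBlank.nth_mk]
  simp [List.getI]

theorem listBlank_eventually {Γ : Type*} [Inhabited Γ] (L : Turing.ListBlank Γ) :
    ∃ N, ∀ n, N ≤ n → L.nth n = default := by
  induction L using Turing.ListBlank.induction_on with
  | _ l =>
    refine ⟨l.length, fun n hn => ?_⟩
    rw [Turing.ListBlank.nth_mk]
    exact List.getI_eq_default _ hn

theorem listBlank_blank_of_tail_eq_cons {Γ : Type*} [Inhabited Γ] (L : Turing.ListBlank Γ) (w : Γ)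
    (h : L.tail = L.cons w) : w = default ∧ L = default := by
  have h2 : ∀ n, L.nth (n + 2) = L.nth n := by
    intro n
    rw [Turing.ListBlank.nth_succ, h, Turing.ListBlank.nth_succ, Turing.ListBlank.tail_cons]
  have h3 : ∀ k n, L.nth (n + 2 * k) = L.nth n := by
    intro k
    induction k with
    | zero => intro n; rfl
    | succ k ih => intro n; rw [← ih n, ← h2 (n + 2 * k)]; rfl
  obtain ⟨N, hN⟩ := listBlank_eventually L
  have h4 : ∀ n, L.nth n = default := fun n => by
    rw [← h3 N n]; exact hN _ (by omega)
  constructor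
  · have h5 := h4 1
    rwa [Turing.ListBlank.nth_succ, h, Turing.ListBlank.nth_zero,
      Turing.ListBlank.head_cons] at h5
  · exact Turing.ListBlank.ext fun n => by rw [h4, listBlank_default_nth]

/-- The "left-move versus right-move" case in the proof of the paper's Lemma 1:
writing `w₁` and moving left gives the same tape as writing `w₂` and moving right
iff both written symbols are blank and both half-tapes of `T` are entirely blank. -/
theorem write_move_left_eq_write_move_right_iff {Γ : Type*} [Inhabited Γ]
    (T : Turing.Tape Γ) (w₁ w₂ : Γ) :
    Turing.Tape.move Turing.Dir.left (T.write w₁) =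
        Turing.Tape.move Turing.Dir.right (T.write w₂) ↔
      w₁ = default ∧ w₂ = default ∧ T.left = default ∧ T.right = default := by
  obtain ⟨a, L, R⟩ := T
  simp only [Turing.Tape.write, Turing.Tape.move, Turing.Tape.mk.injEq]
  constructor
  · rintro ⟨_, hL, hR⟩
    obtain ⟨h1, h2⟩ := listBlank_blank_of_tail_eq_cons L w₂ hL
    obtain ⟨h3, h4⟩ := listBlank_blank_of_tail_eq_cons R w₁ hR.symm
    exact ⟨h3, h1, h2, h4⟩
  · rintro ⟨rfl, rfl, rfl, rfl⟩
    have key : (default : Turing.ListBlank Γ).tail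
        = (default : Turing.ListBlank Γ).cons default := by
      apply Turing.ListBlank.ext
      intro n
      rw [← Turing.ListBlank.nth_succ, listBlank_default_nth]
      cases n with
      | zero => rw [Turing.ListBlank.nth_zero, Turing.ListBlank.head_cons]
      | succ n =>
        rw [Turing.ListBlank.nth_succ, Turing.ListBlank.tail_cons, listBlank_default_nth]
    exact ⟨rfl, key, key.symm⟩
end

section
/- Let Γ be an alphabet with a distinguished blank symbol (blank = default) and Q a type of states, and consider machines M : Q → Γ → Option (Q × Γ × (Option Turing.Dir)) with the step semantics: from configuration (q, T), if M q T.head = none the machine halts, and if M q T.head = some (q', w, d) the next configuration is (q', Tape.move d (T.write w)) when d = some direction and (q', T.write w) when d = none (stay). Then there exists a single 'learning' function S from finite sequences of configurations (lists of Q × Turing.Tape Γ) to machines such that for every machine M, every initial configuration c₀ from which M halts after finitely many steps producing the configuration sequence c₀, c₁, …, cₙ, if at no step i < n the trivial blank case holds (the tape of cᵢ has entirely blank left and right half-tapes and the applied rule writes a blank), and every pair (q, s) on which M is defined occurs as the (state, head symbol) of some cᵢ with i < n, then S applied to the sequence c₀, c₁, …, cₙ equals M. -/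
/-- One step of a machine `M : Q → Γ → Option (Q × Γ × Option Turing.Dir)` on a
configuration (state, tape): `none` means the machine halts. -/
def step {Q Γ : Type*} [Inhabited Γ] (M : Q → Γ → Option (Q × Γ × Option Turing.Dir))
    (c : Q × Turing.Tape Γ) : Option (Q × Turing.Tape Γ) :=
  match M c.1 c.2.head with
  | none => none
  | some (q', w, d) => some (q', moveOpt d (c.2.write w))

theorem ul_lb {Γ : Type*} [Inhabited Γ] (l : Turing.ListBlank Γ) :
    ∃ N : ℕ, ∀ n, N ≤ n → l.nth n = default := by
  induction l using Turing.ListBlank.induction_on with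
  | h l => exact ⟨l.length, fun n hn => by
      rw [Turing.ListBlank.nth_mk]; exact List.getI_eq_default _ hn⟩

theorem ul_tape {Γ : Type*} [Inhabited Γ] (T : Turing.Tape Γ) :
    ∃ N : ℕ, ∀ i : ℤ, (N : ℤ) ≤ |i| → T.nth i = default := by
  obtain ⟨a, ha⟩ := ul_lb T.left
  obtain ⟨b, hb⟩ := ul_lb T.right
  refine ⟨a + b + 1, fun i hi => ?_⟩
  match i with
  | 0 => simp at hi; omega
  | (n + 1 : ℕ) => exact hb n (by rw [abs_of_nonneg (by omega)] at hi; omega)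
  | Int.negSucc n => exact ha n (by rw [abs_of_neg (by omega)] at hi; omega)

theorem ul_core {Γ : Type*} [Inhabited Γ] (g g' : ℤ → Γ)
    (hg : ∃ N : ℕ, ∀ i : ℤ, (N : ℤ) ≤ |i| → g i = default)
    (hg' : ∃ N : ℕ, ∀ i : ℤ, (N : ℤ) ≤ |i| → g' i = default)
    (h0 : ∀ i, i ≠ 0 → g i = g' i) (m : ℤ) (hm : 0 < m)
    (h : ∀ i, g i = g' (i + m)) : (∀ i, g i = default) ∧ ∀ i, g' i = default := by
  obtain ⟨N, hN⟩ := hg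
  obtain ⟨N', hN'⟩ := hg'
  have h1 : ∀ k : ℕ, ∀ i, 0 ≤ i → g i = g (i + k * m) := by
    intro k
    induction k with
    | zero => intro i _; simp
    | succ k ih =>
      intro i hi
      rw [h i, ← h0 _ (by omega), ih _ (by omega)]
      congr 1; push_cast; ring
  have h2 : ∀ k : ℕ, ∀ i, i ≤ 0 → g' i = g' (i - k * m) := by
    intro k
    induction k with
    | zero => intro i _; simp
    | succ k ih =>
      intro i hi
      have := h (i - m)
      rw [sub_add_cancel] at this
      rw [← this, h0 _ (by omega), ih _ (by omega)]
      congr 1; push_cast; ring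
  have h3 : ∀ i, 0 ≤ i → g i = default := fun i hi => by
    rw [h1 N i hi]
    apply hN
    refine le_trans ?_ (le_abs_self _)
    nlinarith
  have h4 : ∀ i, i ≤ 0 → g' i = default := fun i hi => by
    rw [h2 N' i hi]
    apply hN'
    refine le_trans ?_ (neg_le_abs _)
    nlinarith
  constructor <;> intro i <;> rcases lt_trichotomy i 0 with hi | hi | hi
  · rw [h0 i hi.ne]; exact h4 i hi.le
  · exact h3 i hi.ge
  · exact h3 i hi.le
  · exact h4 i hi.le
  · exact h4 i hi.le
  · rw [← h0 i hi.ne']; exact h3 i hi.le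

def ulShift : Option Turing.Dir → ℤ
  | none => 0
  | some .left => -1
  | some .right => 1

theorem ul_moveOpt_nth {Γ : Type*} [Inhabited Γ] (d : Option Turing.Dir) (T : Turing.Tape Γ)
    (i : ℤ) : (moveOpt d T).nth i = T.nth (i + ulShift d) := by
  rcases d with _ | _ | _
  · simp [moveOpt, ulShift]
  · simp [moveOpt, ulShift, Turing.Tape.move_left_nth, sub_eq_add_neg]
  · simp [moveOpt, ulShift, Turing.Tape.move_right_nth]

theorem ul_inj {Γ : Type*} [Inhabited Γ] (T : Turing.Tape Γ) (w w' : Γ)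
    (d d' : Option Turing.Dir) (h : moveOpt d (T.write w) = moveOpt d' (T.write w'))
    (hn : ¬ (T.left = default ∧ T.right = default ∧ w = default)) : w = w' ∧ d = d' := by
  have hs : ∀ i, (T.write w).nth (i + ulShift d) = (T.write w').nth (i + ulShift d') := by
    intro i; rw [← ul_moveOpt_nth, ← ul_moveOpt_nth, h]
  have h0 : ∀ i, i ≠ 0 → (T.write w).nth i = (T.write w').nth i := by
    intro i hi; simp [Turing.Tape.write_nth, hi]
  have key : ¬ ∀ i, (T.write w).nth i = default := by
    intro hd
    apply hn
    refine ⟨?_, ?_, ?_⟩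
    · apply Turing.ListBlank.ext
      intro n
      have : T.left.nth n = default := hd (Int.negSucc n)
      rw [this]; symm
      exact (Turing.ListBlank.nth_mk [] n).trans (List.getI_eq_default _ (by simp))
    · apply Turing.ListBlank.ext
      intro n
      have : T.right.nth n = default := hd ((n + 1 : ℕ) : ℤ)
      rw [this]; symm
      exact (Turing.ListBlank.nth_mk [] n).trans (List.getI_eq_default _ (by simp))
    · exact hd 0
  rcases lt_trichotomy (ulShift d) (ulShift d') with hl | hl | hl
  · refine absurd (ul_core _ _ (ul_tape _) (ul_tape _) h0 (ulShift d' - ulShift d) (by omega) ?_).1 key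
    intro i
    have := hs (i - ulShift d)
    rw [sub_add_cancel] at this
    rw [this]; congr 1; ring
  · constructor
    · have := hs (- ulShift d)
      rw [← hl, neg_add_cancel] at this
      exact this
    · rcases d with _ | _ | _ <;> rcases d' with _ | _ | _ <;> simp_all [ulShift]
  · refine absurd (ul_core _ _ (ul_tape _) (ul_tape _) (fun i hi => (h0 i hi).symm)
      (ulShift d - ulShift d') (by omega) ?_).2 key
    intro i
    have := hs (i - ulShift d')
    rw [sub_add_cancel] at this
    rw [← this]; congr 1; ring

theorem ul_step {Q Γ : Type*} [Inhabited Γ]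
    (M M' : Q → Γ → Option (Q × Γ × Option Turing.Dir)) (c c' : Q × Turing.Tape Γ)
    (h : step M c = some c') (h' : step M' c = some c')
    (hn : ∀ q' w d, M c.1 c.2.head = some (q', w, d) →
          ¬ (c.2.left = default ∧ c.2.right = default ∧ w = default)) :
    M c.1 c.2.head = M' c.1 c.2.head := by
  unfold step at h h'
  rcases e : M c.1 c.2.head with _ | ⟨q, w, d⟩
  · simp [e] at h
  rcases e' : M' c.1 c.2.head with _ | ⟨q', w', d'⟩
  · simp [e'] at h'
  rw [e] at h
  rw [e'] at h'
  have h2 := h.trans h'.symm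
  simp only [Option.some.injEq, Prod.mk.injEq] at h2
  obtain ⟨rfl, h3⟩ := h2
  obtain ⟨rfl, rfl⟩ := ul_inj _ _ _ _ _ h3 (hn _ _ _ e)
  rfl

def UlGood {Q Γ : Type*} [Inhabited Γ] (L : List (Q × Turing.Tape Γ))
    (M : Q → Γ → Option (Q × Γ × Option Turing.Dir)) : Prop :=
  ∃ (n : ℕ) (c : ℕ → Q × Turing.Tape Γ), L = (List.ofFn fun i : Fin (n + 1) => c i) ∧
        (∀ i < n, step M (c i) = some (c (i + 1))) ∧
        (∀ i < n, ∀ q' w d, M (c i).1 (c i).2.head = some (q', w, d) →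
          ¬ ((c i).2.left = default ∧ (c i).2.right = default ∧ w = default)) ∧
        (∀ q s, M q s ≠ none → ∃ i < n, (c i).1 = q ∧ (c i).2.head = s)

theorem ul_unique {Q Γ : Type*} [Inhabited Γ] (L : List (Q × Turing.Tape Γ))
    (M M' : Q → Γ → Option (Q × Γ × Option Turing.Dir)) (h : UlGood L M) (h' : UlGood L M') :
    M = M' := by
  obtain ⟨n, c, hL, h1, h2, h3⟩ := h
  obtain ⟨n', c', hL', h1', h2', h3'⟩ := h'
  have hL2 := hL.symm.trans hL'
  have hlen := congrArg List.length hL2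
  simp only [List.length_ofFn, Nat.add_right_cancel_iff] at hlen
  subst hlen
  have hc : ∀ i, i ≤ n → c i = c' i := fun i hi =>
    congrFun (List.ofFn_injective hL2) ⟨i, by omega⟩
  have key : ∀ i < n, M (c i).1 (c i).2.head = M' (c i).1 (c i).2.head := by
    intro i hi
    refine ul_step M M' (c i) (c (i + 1)) (h1 i hi) ?_ (h2 i hi)
    rw [hc i hi.le, hc (i + 1) hi]; exact h1' i hi
  funext q s
  by_cases e : M q s = none
  · by_cases e' : M' q s = none
    · rw [e, e']
    · obtain ⟨i, hi, rfl, rfl⟩ := h3' q s e'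
      rw [← hc i hi.le]; exact key i hi
  · obtain ⟨i, hi, rfl, rfl⟩ := h3 q s e
    exact key i hi


/-- The paper's Theorem 1 (Universal Learning): there is a single learning function `S`
from finite sequences of configurations to machines that recovers every machine `M`
from the configuration sequence `c 0, c 1, …, c n` of any halting run, provided no step
is in the trivial blank case and every transition rule of `M` is used during the run. -/
theorem universal_learning {Q Γ : Type*} [Inhabited Γ] :
    ∃ S : List (Q × Turing.Tape Γ) → (Q → Γ → Option (Q × Γ × Option Turing.Dir)),
      ∀ (M : Q → Γ → Option (Q × Γ × Option Turing.Dir)) (n : ℕ)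
        (c : ℕ → Q × Turing.Tape Γ),
        (∀ i < n, step M (c i) = some (c (i + 1))) →
        step M (c n) = none →
        (∀ i < n, ∀ q' w d, M (c i).1 (c i).2.head = some (q', w, d) →
          ¬ ((c i).2.left = default ∧ (c i).2.right = default ∧ w = default)) →
        (∀ q s, M q s ≠ none → ∃ i < n, (c i).1 = q ∧ (c i).2.head = s) →
        S (List.ofFn fun i : Fin (n + 1) => c i) = M := by
  classical
  refine ⟨fun L => if h : ∃ M, UlGood L M then h.choose else fun _ _ => none, ?_⟩
  intro M n c h1 _ h2 h3
  have hg : UlGood (List.ofFn fun i : Fin (n + 1) => c i) M := ⟨n, c, rfl, h1, h2, h3⟩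
  have hex : ∃ M, UlGood (List.ofFn fun i : Fin (n + 1) => c i) M := ⟨M, hg⟩
  simp only [dif_pos hex]
  exact ul_unique _ _ _ hex.choose_spec hg
end
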